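/- Suppose n is a natural number and T_n : U_{2n}(∞) → ℂ is a linear functional which is pseudo-positive definite with respect to the orthonormal basis Y_{k,l} (i.e. its component functionals T_{n,k,l}(p) := T_n(p(|x|²) Y_{k,l}(x)) on polynomials of degree ≤ 2n satisfy T_{n,k,l}(p*·p) ≥ 0 for deg p ≤ n and T_{n,k,l}(t·p*(t)·p(t)) ≥ 0 for deg p ≤ n−1, for all k, l). Assume there exist non-negative measures σ_{k,l} on [0,∞) representing each T_{n,k,l} on polynomials of degree ≤ 2n−1 such that C_N := Σ_{k=0}^∞ Σ_{l=1}^{a_k} ∫_0^∞ r^N r^{-k} dσ_{k,l}(r) < ∞ for every N ∈ ℕ₀. Then there exists a pseudo-positive signed moment measure σ on ℝ^d such that T_n(f) = ∫_{ℝ^d} f dσ for all f ∈ U_{2n-1}(∞). -/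

import Mathlib

open MeasureTheory MvPolynomial Metric
open scoped ComplexOrder ENNReal

noncomputable section

/-- `d`-dimensional Euclidean space. -/
abbrev E (d : ℕ) := EuclideanSpace ℝ (Fin d)

/-- The (surface) measure `dθ` on the unit sphere `S^{d-1}`. -/
noncomputable def sphMeas (d : ℕ) : Measure (sphere (0 : E d) 1) :=
  (volume : Measure (E d)).toSphere

/-- A bundled orthonormal basis `Y_{k,l}`, `l = 1,…,a_k`, of the spaces `H_k(ℝ^d)` of
real-valued harmonic polynomials homogeneous of degree `k`, orthonormal with respect to
`⟨f,g⟩ = ∫_{S^{d-1}} f g dθ`. -/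
structure HarmonicBasis (d : ℕ) where
  a : ℕ → ℕ
  Y : (k : ℕ) → Fin (a k) → MvPolynomial (Fin d) ℝ
  harmonic : ∀ k l, (∑ i, pderiv i (pderiv i (Y k l))) = 0
  homogeneous : ∀ k l, (Y k l).IsHomogeneous k
  orthonormal : ∀ (k k' : ℕ) (l : Fin (a k)) (l' : Fin (a k')),
    (∫ θ : sphere (0 : E d) 1,
        (eval (fun i => (θ : E d) i) (Y k l)) * (eval (fun i => (θ : E d) i) (Y k' l'))
      ∂(sphMeas d)) = if k = k' ∧ (l : ℕ) = (l' : ℕ) then 1 else 0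
  complete : ∀ (k : ℕ) (P : MvPolynomial (Fin d) ℝ),
    (∑ i, pderiv i (pderiv i P)) = 0 → P.IsHomogeneous k →
      P ∈ Submodule.span ℝ (Set.range (Y k))

/-- Evaluation of a complex polynomial in `d` variables at a point of `ℝ^d`. -/
def evalC {d : ℕ} (P : MvPolynomial (Fin d) ℂ) (x : E d) : ℂ :=
  eval (fun i => (x i : ℂ)) P

/-- The polynomial `|x|² = x₁² + … + x_d²`. -/
def normSqP (d : ℕ) : MvPolynomial (Fin d) ℂ := ∑ i, X i ^ 2

/-- Integral of a (complex- or real-valued) function with respect to a signed measure,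
via the Jordan decomposition. -/
noncomputable def sInt {α : Type*} {G : Type*} [MeasurableSpace α] [NormedAddCommGroup G]
    [NormedSpace ℝ G] (μ : SignedMeasure α) (f : α → G) : G :=
  (∫ x, f x ∂μ.toJordanDecomposition.posPart) - ∫ x, f x ∂μ.toJordanDecomposition.negPart

/-- A signed measure is a moment measure if every polynomial is integrable with respect to
its total variation. -/
def IsMomentMeasure {d : ℕ} (μ : SignedMeasure (E d)) : Prop :=
  ∀ P : MvPolynomial (Fin d) ℂ, Integrable (evalC P) μ.totalVariation

namespace HarmonicBasis

variable {d : ℕ} (B : HarmonicBasis d)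

/-- `Y_{k,l}` as a function on `ℝ^d`. -/
def Yf (k : ℕ) (l : Fin (B.a k)) (x : E d) : ℝ := eval (fun i => x i) (B.Y k l)

/-- `Y_{k,l}` as a complex polynomial. -/
def YC (k : ℕ) (l : Fin (B.a k)) : MvPolynomial (Fin d) ℂ :=
  (B.Y k l).map (algebraMap ℝ ℂ)

/-- The Laplace–Fourier coefficient `f_{k,l}(r) = ∫_{S^{d-1}} f(rθ) Y_{k,l}(θ) dθ`. -/
noncomputable def lfCoeff (f : E d → ℂ) (k : ℕ) (l : Fin (B.a k)) (r : ℝ) : ℂ :=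
  ∫ θ : sphere (0 : E d) 1, f (r • (θ : E d)) * (B.Yf k l (θ : E d) : ℂ) ∂(sphMeas d)

/-- `GaussDecomp B f K p` : `p` is a Gauss (Laplace–Fourier) decomposition of the polynomial
`f`, i.e. `f(x) = ∑_{k=0}^{K} ∑_{l=1}^{a_k} p_{k,l}(|x|²) Y_{k,l}(x)` with `p_{k,l} = 0` for
`k > K`. -/
def GaussDecomp (f : MvPolynomial (Fin d) ℂ) (K : ℕ)
    (p : (k : ℕ) → Fin (B.a k) → Polynomial ℂ) : Prop :=
  (∀ k, K < k → ∀ l, p k l = 0) ∧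
    f = ∑ k ∈ Finset.range (K + 1), ∑ l,
      Polynomial.aeval (normSqP d) (p k l) * B.YC k l

/-- The component functional `T_{k,l}(p) = T(p(|x|²) Y_{k,l}(x))`. -/
def component (T : MvPolynomial (Fin d) ℂ → ℂ) (k : ℕ) (l : Fin (B.a k))
    (p : Polynomial ℂ) : ℂ :=
  T (Polynomial.aeval (normSqP d) p * B.YC k l)

/-- A functional `T` on `ℂ[x₁,…,x_d]` is pseudo-positive definite (w.r.t. the basis `Y_{k,l}`)
if `T_{k,l}(p* p) ≥ 0` and `T_{k,l}(t · p*(t) p(t)) ≥ 0` for all univariate `p` and all `k, l`. -/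
def PPD (T : MvPolynomial (Fin d) ℂ → ℂ) : Prop :=
  ∀ (k : ℕ) (l : Fin (B.a k)) (p : Polynomial ℂ),
    0 ≤ B.component T k l (p.map (starRingEnd ℂ) * p) ∧
    0 ≤ B.component T k l (Polynomial.X * (p.map (starRingEnd ℂ) * p))

/-- A signed measure `μ` on `ℝ^d` is pseudo-positive (w.r.t. the basis `Y_{k,l}`) if
`∫ h(|x|) Y_{k,l}(x) dμ ≥ 0` for every non-negative continuous compactly supported `h`. -/
def PseudoPositive (μ : SignedMeasure (E d)) : Prop :=
  ∀ (k : ℕ) (l : Fin (B.a k)) (h : ℝ → ℝ), Continuous h → HasCompactSupport h →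
    (∀ t, 0 ≤ h t) → 0 ≤ sInt μ (fun x => h ‖x‖ * B.Yf k l x)

/-- `ν` is the family of component measures `μ_{k,l}` of the signed measure `μ`, i.e.
`∫_0^∞ h dμ_{k,l} = ∫_{ℝ^d} h(|x|) Y_{k,l}(x) dμ` for all continuous compactly supported `h`. -/
def IsComponentFamily (μ : SignedMeasure (E d))
    (ν : (k : ℕ) → Fin (B.a k) → Measure ℝ) : Prop :=
  ∀ k l, (ν k l) (Set.Iio 0) = 0 ∧
    ∀ h : ℝ → ℝ, Continuous h → HasCompactSupport h →
      ∫ t, h t ∂(ν k l) = sInt μ (fun x => h ‖x‖ * B.Yf k l x)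

/-- The summability condition `C_N = ∑_{k,l} ∫_0^∞ r^N r^{-k} dσ_{k,l}(r) < ∞` for all `N`. -/
def SummCond (σ : (k : ℕ) → Fin (B.a k) → Measure ℝ) : Prop :=
  ∀ N : ℕ, (∑' k : ℕ, ∑ l, ∫⁻ r, (ENNReal.ofReal r) ^ N * ((ENNReal.ofReal r) ^ k)⁻¹
    ∂(σ k l)) < ⊤

end HarmonicBasis

/-- The set `W_τ^{Sti}` of all non-negative moment measures on `[0,∞)` having the same
moments as `τ`. -/
def WSti (τ : Measure ℝ) : Set (Measure ℝ) :=
  {ρ | ρ (Set.Iio 0) = 0 ∧ (∀ m : ℕ, Integrable (fun t => t ^ m) ρ) ∧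
    ∀ m : ℕ, ∫ t, t ^ m ∂ρ = ∫ t, t ^ m ∂τ}

/-- A measure `ν` on `[0,∞)` is determined in the sense of Stieltjes if it is the only
non-negative measure on `[0,∞)` with its moments. -/
def StieltjesDeterminate (ν : Measure ℝ) : Prop :=
  ∀ τ : Measure ℝ, τ ∈ WSti ν → τ = ν

/-- The space `U_n(∞)`: polynomials `f = ∑_k ∑_l p_{k,l}(|x|²) Y_{k,l}(x)` with
`deg p_{k,l} ≤ n` for all `k`. -/
def HarmonicBasis.MemUInf {d : ℕ} (B : HarmonicBasis d) (n : ℕ)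
    (f : MvPolynomial (Fin d) ℂ) : Prop :=
  ∃ (K : ℕ) (p : (k : ℕ) → Fin (B.a k) → Polynomial ℂ),
    (∀ k l, (p k l).natDegree ≤ n) ∧ (∀ k, K < k → ∀ l, p k l = 0) ∧
    f = ∑ k ∈ Finset.range (K + 1), ∑ l, Polynomial.aeval (normSqP d) (p k l) * B.YC k l
/-!
Push the signed measure `∑_{k,l} Y_{k,l}(θ) dθ ⊗ r^{-k} dσ_{k,l}(r)` forward under `(θ, r) ↦ rθ`.
By orthonormality `∫ |Y_{k,l}| dθ` is bounded uniformly in `k, l`, so `C_N < ∞` for all `N` makes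
the sum absolutely convergent with finite moments. Integrating `g(|x|) Y_{k,l}(x)` against it, the
homogeneity factor `r^k` cancels `r^{-k}` and orthonormality kills every other summand, which
leaves `∫ g dσ_{k,l}`. Taking `g ≥ 0` gives pseudo-positivity, and `g(r) = p(r²)` gives
`T(p(|x|²) Y_{k,l}(x))`.
-/

section SignedMeasure

variable {α β G : Type*} [MeasurableSpace α] [MeasurableSpace β] [NormedAddCommGroup G]
  [NormedSpace ℝ G]

theorem sInt_eq_integral_vectorMeasure {μ : SignedMeasure α} {f : α → G}
    (hf : Integrable f μ.totalVariation) : sInt μ f = ∫ᵛ x, f x ∂<•μ := by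
  set j := μ.toJordanDecomposition
  have hpos : j.posPart.toSignedMeasure.Integrable f := by
    simpa [VectorMeasure.Integrable] using hf.left_of_add_measure
  have hneg : j.negPart.toSignedMeasure.Integrable f := by
    simpa [VectorMeasure.Integrable] using hf.right_of_add_measure
  have hj : μ = j.posPart.toSignedMeasure - j.negPart.toSignedMeasure :=
    μ.toSignedMeasure_toJordanDecomposition.symm
  calc sInt μ f = ∫ᵛ x, f x ∂<•j.posPart.toSignedMeasure
        - ∫ᵛ x, f x ∂<•j.negPart.toSignedMeasure := by
        simp only [VectorMeasure.integral_toSignedMeasure, sInt, j]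
    _ = ∫ᵛ x, f x ∂<•μ := by rw [← VectorMeasure.integral_sub_vectorMeasure hpos hneg, ← hj]

variable {μ : Measure α} {g : α → ℝ}

theorem integrable_variation_withDensityᵥ {f : α → G} (hg : Integrable g μ)
    (hf : AEStronglyMeasurable f μ) (hgf : Integrable (fun x => g x • f x) μ) :
    (μ.withDensityᵥ g).Integrable f := by
  rw [VectorMeasure.Integrable, Measure.variation_withDensityᵥ hg,
    integrable_withDensity_iff_integrable_smul₀' hg.aestronglyMeasurable.enorm (by simp)]
  exact hgf.mono (hg.aestronglyMeasurable.enorm.ennreal_toReal.aestronglyMeasurable.smul hf)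
    (by simp [norm_smul])

theorem integral_withDensityᵥ {f : α → G} (hg : Integrable g μ)
    (hf : AEStronglyMeasurable f μ) (hgf : Integrable (fun x => g x • f x) μ) :
    ∫ᵛ x, f x ∂<•(μ.withDensityᵥ g) = ∫ x, g x • f x ∂μ := by
  have := isFiniteMeasure_withDensity_ofReal hg.2
  have := isFiniteMeasure_withDensity_ofReal hg.neg.2
  have hpos : AEMeasurable (fun x => ENNReal.ofReal (g x)) μ := hg.1.aemeasurable.ennreal_ofReal
  have hneg : AEMeasurable (fun x => ENNReal.ofReal (-g x)) μ :=
    hg.1.aemeasurable.neg.ennreal_ofReal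
  have hposf : Integrable (fun x => (ENNReal.ofReal (g x)).toReal • f x) μ :=
    hgf.mono (hpos.ennreal_toReal.aestronglyMeasurable.smul hf) <| .of_forall fun x => by
      rw [norm_smul, norm_smul, ENNReal.toReal_ofReal']
      gcongr
      simp [abs_le, le_abs_self]
  have hnegf : Integrable (fun x => (ENNReal.ofReal (-g x)).toReal • f x) μ :=
    hgf.mono (hneg.ennreal_toReal.aestronglyMeasurable.smul hf) <| .of_forall fun x => by
      rw [norm_smul, norm_smul, ENNReal.toReal_ofReal']
      gcongr
      simp [abs_le, neg_le_abs]
  rw [withDensityᵥ_eq_withDensity_pos_part_sub_withDensity_neg_part hg,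
    VectorMeasure.integral_sub_vectorMeasure, VectorMeasure.integral_toSignedMeasure,
    VectorMeasure.integral_toSignedMeasure,
    integral_withDensity_eq_integral_toReal_smul₀ hpos (by simp),
    integral_withDensity_eq_integral_toReal_smul₀ hneg (by simp), ← integral_sub hposf hnegf]
  · simp only [← sub_smul, ENNReal.toReal_ofReal', max_zero_sub_max_neg_zero_eq_self]
  all_goals simp only [VectorMeasure.Integrable, Measure.variation_toSignedMeasure]
  · rwa [integrable_withDensity_iff_integrable_smul₀' hpos (by simp)]
  · rwa [integrable_withDensity_iff_integrable_smul₀' hneg (by simp)]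

variable {φ : α → β} {f : β → G}

theorem integrable_totalVariation_map_withDensityᵥ (hg : Integrable g μ) (hφ : Measurable φ)
    (hf : StronglyMeasurable f) (hgf : Integrable (fun x => g x • f (φ x)) μ) :
    Integrable f (SignedMeasure.totalVariation ((μ.withDensityᵥ g).map φ)) := by
  rw [SignedMeasure.totalVariation_eq_variation]
  exact VectorMeasure.Integrable.map hf.aestronglyMeasurable <|
    integrable_variation_withDensityᵥ hg (hf.comp_measurable hφ).aestronglyMeasurable hgf

theorem sInt_map_withDensityᵥ (hg : Integrable g μ) (hφ : Measurable φ)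
    (hf : StronglyMeasurable f) (hgf : Integrable (fun x => g x • f (φ x)) μ) :
    sInt ((μ.withDensityᵥ g).map φ) f = ∫ x, g x • f (φ x) ∂μ := by
  have hfφ : AEStronglyMeasurable (f ∘ φ) μ := (hf.comp_measurable hφ).aestronglyMeasurable
  rw [sInt_eq_integral_vectorMeasure (integrable_totalVariation_map_withDensityᵥ hg hφ hf hgf),
    VectorMeasure.integral_map hφ hf.aestronglyMeasurable
      (integrable_variation_withDensityᵥ hg hfφ hgf)]
  exact integral_withDensityᵥ hg hfφ hgf

end SignedMeasure

section Polynomial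

theorem eval_smul_of_isHomogeneous {ι R : Type*} [CommSemiring R] {P : MvPolynomial ι R} {k : ℕ}
    (hP : P.IsHomogeneous k) (r : R) (x : ι → R) : eval (r • x) P = r ^ k * eval x P := by
  rw [eval_eq, eval_eq, Finset.mul_sum]
  refine Finset.sum_congr rfl fun m hm => ?_
  have hmk : ∑ i ∈ m.support, m i = k := by
    rw [← hP (mem_support_iff.1 hm), Finsupp.weight_apply]
    simp [Finsupp.sum]
  simp only [Pi.smul_apply, smul_eq_mul, mul_pow, Finset.prod_mul_distrib,
    Finset.prod_pow_eq_pow_sum, hmk]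
  ring

variable {d : ℕ}

theorem continuous_evalC (P : MvPolynomial (Fin d) ℂ) : Continuous (evalC P) :=
  (MvPolynomial.continuous_eval P).comp (by fun_prop)

theorem norm_evalC_le (P : MvPolynomial (Fin d) ℂ) (x : E d) :
    ‖evalC P x‖ ≤ ∑ m ∈ P.support, ‖P.coeff m‖ * ‖x‖ ^ m.degree := by
  rw [evalC, eval_eq']
  refine (norm_sum_le _ _).trans (Finset.sum_le_sum fun m _ => ?_)
  rw [norm_mul, norm_prod, Finsupp.degree_eq_sum, ← Finset.prod_pow_eq_pow_sum]
  gcongr with i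
  rw [norm_pow, Complex.norm_real]
  gcongr
  exact PiLp.norm_apply_le x i

theorem evalC_normSqP (x : E d) : evalC (normSqP d) x = (‖x‖ : ℂ) ^ 2 := by
  rw [← Complex.ofReal_pow, EuclideanSpace.norm_sq_eq]
  simp [evalC, normSqP]

theorem evalC_aeval (p : Polynomial ℂ) (Q : MvPolynomial (Fin d) ℂ) (x : E d) :
    evalC (Polynomial.aeval Q p) x = p.eval (evalC Q x) := by
  have h := Polynomial.aeval_algHom_apply (MvPolynomial.aeval fun i => (x i : ℂ)) Q p
  simpa [evalC, MvPolynomial.aeval_eq_eval] using h.symm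

theorem IsMomentMeasure.sInt_evalC_sum {μ : SignedMeasure (E d)} (hμ : IsMomentMeasure μ)
    {ι : Type*} (s : Finset ι) (P : ι → MvPolynomial (Fin d) ℂ) :
    sInt μ (evalC (∑ i ∈ s, P i)) = ∑ i ∈ s, sInt μ (evalC (P i)) := by
  have hsum : evalC (∑ i ∈ s, P i) = fun x => ∑ i ∈ s, evalC (P i) x := by
    ext x
    simp only [evalC, map_sum]
  simp only [hsum, sInt]
  rw [integral_finsetSum _ fun i _ => (hμ (P i)).left_of_add_measure,
    integral_finsetSum _ fun i _ => (hμ (P i)).right_of_add_measure, Finset.sum_sub_distrib]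

end Polynomial

instance isFiniteMeasure_sphMeas (d : ℕ) : IsFiniteMeasure (sphMeas d) := by
  unfold sphMeas; infer_instance

instance discreteMeasurableSpace_sigma {ι : Type*} {β : ι → Type*}
    [∀ i, MeasurableSpace (β i)] [∀ i, DiscreteMeasurableSpace (β i)] :
    DiscreteMeasurableSpace (Σ i, β i) :=
  ⟨fun _ => MeasurableSpace.measurableSet_iInf.2 fun i =>
    show MeasurableSet (Sigma.mk i ⁻¹' _) from .of_discrete⟩

theorem ae_nonneg_of_measure_Iio_eq_zero {ν : Measure ℝ} (hν : ν (Set.Iio 0) = 0) :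
    ∀ᵐ r ∂ν, 0 ≤ r := by
  simpa [ae_iff, Set.Iio_def] using hν

namespace HarmonicBasis

section Basis

variable {d : ℕ} (B : HarmonicBasis d)

theorem continuous_Yf (k : ℕ) (l : Fin (B.a k)) : Continuous (B.Yf k l) :=
  (MvPolynomial.continuous_eval _).comp (by fun_prop)

theorem Yf_smul (k : ℕ) (l : Fin (B.a k)) (r : ℝ) (x : E d) :
    B.Yf k l (r • x) = r ^ k * B.Yf k l x :=
  eval_smul_of_isHomogeneous (B.homogeneous k l) r x

theorem evalC_YC (k : ℕ) (l : Fin (B.a k)) (x : E d) : evalC (B.YC k l) x = B.Yf k l x :=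
  (eval_map _ _ _).trans (eval₂_comp (algebraMap ℝ ℂ) _ _).symm

theorem evalC_aeval_normSqP_mul_YC (k : ℕ) (l : Fin (B.a k)) (p : Polynomial ℂ) (x : E d) :
    evalC (Polynomial.aeval (normSqP d) p * B.YC k l) x =
      B.Yf k l x • p.eval ((‖x‖ : ℂ) ^ 2) := by
  rw [← evalC_normSqP, ← evalC_aeval, Complex.real_smul, ← evalC_YC, mul_comm]
  exact map_mul _ _ _

/-- The index set of the pairs `(k, l)`. -/
abbrev Index : Type := Σ k, Fin (B.a k)

theorem integral_Yf_mul_Yf (i j : B.Index) :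
    ∫ θ : sphere (0 : E d) 1, B.Yf i.1 i.2 θ * B.Yf j.1 j.2 θ ∂sphMeas d =
      if i = j then 1 else 0 := by
  refine (B.orthonormal i.1 j.1 i.2 j.2).trans (if_congr ?_ rfl rfl)
  rw [Sigma.ext_iff, and_congr_right_iff]
  intro h
  rw [Fin.heq_ext_iff (congrArg B.a h)]

theorem lintegral_enorm_Yf_le (k : ℕ) (l : Fin (B.a k)) :
    ∫⁻ θ : sphere (0 : E d) 1, ‖B.Yf k l θ‖ₑ ∂sphMeas d ≤ sphMeas d Set.univ + 1 := by
  have hY : Continuous fun θ : sphere (0 : E d) 1 => B.Yf k l θ :=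
    (B.continuous_Yf k l).comp continuous_subtype_val
  have hsq : ∫⁻ θ : sphere (0 : E d) 1, ‖B.Yf k l θ‖ₑ ^ 2 ∂sphMeas d = 1 := by
    have horth := B.integral_Yf_mul_Yf ⟨k, l⟩ ⟨k, l⟩
    rw [if_pos rfl, integral_eq_lintegral_of_nonneg_ae (.of_forall fun _ => mul_self_nonneg _)
      (by fun_prop), ENNReal.toReal_eq_one_iff] at horth
    rw [← horth]
    congr with θ
    rw [← Real.enorm_of_nonneg (mul_self_nonneg _), enorm_mul, sq]
  calc ∫⁻ θ : sphere (0 : E d) 1, ‖B.Yf k l θ‖ₑ ∂sphMeas d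
      ≤ ∫⁻ θ : sphere (0 : E d) 1, 1 + ‖B.Yf k l θ‖ₑ ^ 2 ∂sphMeas d := by
        gcongr with θ
        rcases le_total ‖B.Yf k l θ‖ₑ 1 with h | h
        · exact h.trans le_self_add
        · exact (le_self_pow h two_ne_zero).trans le_add_self
    _ = sphMeas d Set.univ + 1 := by
        rw [lintegral_add_left measurable_const, lintegral_const, one_mul, hsq]

end Basis

section RadialMeasure

variable {d : ℕ} {B : HarmonicBasis d}

/-- The measure `r^{-k} dσ_{k,l}(r)`, with density `∞` at `r = 0` when `k > 0`. -/
def radialMeasure (σ : (k : ℕ) → Fin (B.a k) → Measure ℝ) (i : B.Index) : Measure ℝ :=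
  (σ i.1 i.2).withDensity fun r => (ENNReal.ofReal r ^ i.1)⁻¹

variable {σ : (k : ℕ) → Fin (B.a k) → Measure ℝ}

theorem lintegral_enorm_pow_radialMeasure (hpos : ∀ k l, σ k l (Set.Iio 0) = 0) (i : B.Index)
    (N : ℕ) : ∫⁻ r, ‖r‖ₑ ^ N ∂radialMeasure σ i =
      ∫⁻ r, ENNReal.ofReal r ^ N * (ENNReal.ofReal r ^ i.1)⁻¹ ∂σ i.1 i.2 := by
  rw [radialMeasure, lintegral_withDensity_eq_lintegral_mul _ (by fun_prop) (by fun_prop)]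
  refine lintegral_congr_ae ?_
  filter_upwards [ae_nonneg_of_measure_Iio_eq_zero (hpos i.1 i.2)] with r hr
  rw [Pi.mul_apply, mul_comm, Real.enorm_eq_ofReal hr]

theorem SummCond.tsum_lintegral_radialMeasure_lt_top (hsum : B.SummCond σ)
    (hpos : ∀ k l, σ k l (Set.Iio 0) = 0) (N : ℕ) :
    ∑' i, ∫⁻ r, ‖r‖ₑ ^ N ∂radialMeasure σ i < ⊤ := by
  simpa only [lintegral_enorm_pow_radialMeasure hpos, ENNReal.tsum_sigma', tsum_fintype]
    using hsum N

theorem SummCond.lintegral_inv_ofReal_pow_ne_top (hsum : B.SummCond σ) (k : ℕ)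
    (l : Fin (B.a k)) : ∫⁻ r, (ENNReal.ofReal r ^ k)⁻¹ ∂σ k l ≠ ⊤ := by
  have h := ENNReal.ne_top_of_tsum_ne_top (hsum 0).ne k
  simpa using (ENNReal.sum_ne_top.1 h) l (Finset.mem_univ l)

theorem SummCond.isFiniteMeasure_radialMeasure (hsum : B.SummCond σ) (i : B.Index) :
    IsFiniteMeasure (radialMeasure σ i) :=
  isFiniteMeasure_withDensity (hsum.lintegral_inv_ofReal_pow_ne_top i.1 i.2)

-- Integrability of `r^{-k}` forces `σ_{k,l} {0} = 0` for `k > 0`, so nothing is lost at `0`.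
theorem SummCond.integral_pow_smul_radialMeasure (hsum : B.SummCond σ)
    (hpos : ∀ k l, σ k l (Set.Iio 0) = 0) {G : Type*} [NormedAddCommGroup G] [NormedSpace ℝ G]
    (g : ℝ → G) (i : B.Index) :
    ∫ r, r ^ i.1 • g |r| ∂radialMeasure σ i = ∫ r, g r ∂σ i.1 i.2 := by
  have hfin : ∀ᵐ r ∂σ i.1 i.2, (ENNReal.ofReal r ^ i.1)⁻¹ < ⊤ :=
    ae_lt_top (by fun_prop) (hsum.lintegral_inv_ofReal_pow_ne_top i.1 i.2)
  rw [radialMeasure, integral_withDensity_eq_integral_toReal_smul₀ (by fun_prop) hfin]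
  refine integral_congr_ae ?_
  filter_upwards [hfin, ae_nonneg_of_measure_Iio_eq_zero (hpos i.1 i.2)] with r hr hr0
  have hrk : r ^ i.1 ≠ 0 := by
    intro h
    simp [← ENNReal.ofReal_pow hr0, h] at hr
  rw [← ENNReal.ofReal_pow hr0, ENNReal.toReal_inv, ENNReal.toReal_ofReal (pow_nonneg hr0 _),
    inv_smul_smul₀ hrk, abs_of_nonneg hr0]

end RadialMeasure

section Synthesis

variable {d : ℕ} (B : HarmonicBasis d)

/-- Pairs of an index `(k, l)` and polar coordinates `(θ, r)`. -/
abbrev PolarSpace : Type := B.Index × (sphere (0 : E d) 1 × ℝ)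

/-- The point `r θ` of `ℝ^d` with polar coordinates `(θ, r)`. -/
def polarPoint (ω : B.PolarSpace) : E d := ω.2.2 • (ω.2.1 : E d)

/-- The function `(k, l, θ, r) ↦ Y_{k,l}(θ)`. -/
def angularDensity (ω : B.PolarSpace) : ℝ := B.Yf ω.1.1 ω.1.2 ω.2.1

variable {B} (σ : (k : ℕ) → Fin (B.a k) → Measure ℝ)

/-- The measure equal to `dθ ⊗ r^{-k} dσ_{k,l}(r)` on the slice of index `(k, l)`. -/
def polarMeasure : Measure B.PolarSpace :=
  Measure.sum fun i => ((sphMeas d).prod (radialMeasure σ i)).map (Prod.mk i)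

/-- The signed measure `∑_{k,l} Y_{k,l}(θ) dθ ⊗ r^{-k} dσ_{k,l}(r)` on `ℝ^d`, in polar
coordinates, whose component measures are the `σ_{k,l}` under `SummCond`. If `angularDensity` is
not integrable, `withDensityᵥ` makes it `0`. -/
def synthesis : SignedMeasure (E d) :=
  ((polarMeasure σ).withDensityᵥ B.angularDensity).map B.polarPoint

theorem measurable_polarPoint : Measurable B.polarPoint := by
  unfold polarPoint
  fun_prop

theorem measurable_angularDensity : Measurable B.angularDensity :=
  measurable_from_prod_countable_right fun i =>
    (B.continuous_Yf i.1 i.2).measurable.comp (by fun_prop)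

theorem norm_polarPoint (ω : B.PolarSpace) : ‖B.polarPoint ω‖ = |ω.2.2| := by
  rw [polarPoint, norm_smul, norm_eq_of_mem_sphere, mul_one, Real.norm_eq_abs]

theorem Yf_polarPoint (k : ℕ) (l : Fin (B.a k)) (ω : B.PolarSpace) :
    B.Yf k l (B.polarPoint ω) = ω.2.2 ^ k * B.Yf k l ω.2.1 :=
  B.Yf_smul k l _ _

theorem lintegral_polarMeasure (f : B.PolarSpace → ℝ≥0∞) :
    ∫⁻ ω, f ω ∂polarMeasure σ =
      ∑' i, ∫⁻ z, f (i, z) ∂(sphMeas d).prod (radialMeasure σ i) := by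
  simp only [polarMeasure, lintegral_sum_measure,
    (measurableEmbedding_prodMk_left _).lintegral_map]

variable {σ} {G : Type*} [NormedAddCommGroup G] [NormedSpace ℝ G]

theorem integral_polarMeasure {f : B.PolarSpace → G} (hf : Integrable f (polarMeasure σ)) :
    ∫ ω, f ω ∂polarMeasure σ =
      ∑' i, ∫ z, f (i, z) ∂(sphMeas d).prod (radialMeasure σ i) := by
  rw [polarMeasure, integral_sum_measure hf]
  simp only [(measurableEmbedding_prodMk_left _).integral_map]

section Moments

variable (hpos : ∀ k l, σ k l (Set.Iio 0) = 0) (hsum : B.SummCond σ)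
include hpos hsum

theorem integrable_angularDensity_mul_norm_polarPoint_pow (N : ℕ) :
    Integrable (fun ω => B.angularDensity ω * ‖B.polarPoint ω‖ ^ N) (polarMeasure σ) := by
  refine ⟨(measurable_angularDensity.mul
    (measurable_polarPoint.norm.pow_const N)).aestronglyMeasurable, ?_⟩
  have hslice (i : B.Index) : ∫⁻ z, ‖B.angularDensity (i, z) * ‖B.polarPoint (i, z)‖ ^ N‖ₑ
      ∂(sphMeas d).prod (radialMeasure σ i) ≤
        (sphMeas d Set.univ + 1) * ∫⁻ r, ‖r‖ₑ ^ N ∂radialMeasure σ i := by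
    have := hsum.isFiniteMeasure_radialMeasure i
    have hY := (B.continuous_Yf i.1 i.2).comp (continuous_subtype_val (p := (· ∈ sphere 0 1)))
    calc _ = ∫⁻ z : sphere (0 : E d) 1 × ℝ, ‖B.Yf i.1 i.2 z.1‖ₑ * ‖z.2‖ₑ ^ N
          ∂(sphMeas d).prod (radialMeasure σ i) := by
          simp only [norm_polarPoint, enorm_mul, enorm_pow, Real.enorm_abs, angularDensity]
      _ = (∫⁻ θ : sphere (0 : E d) 1, ‖B.Yf i.1 i.2 θ‖ₑ ∂sphMeas d) *
          ∫⁻ r, ‖r‖ₑ ^ N ∂radialMeasure σ i :=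
          lintegral_prod_mul hY.measurable.enorm.aemeasurable
            (measurable_enorm.pow_const N).aemeasurable
      _ ≤ _ := by gcongr; exact B.lintegral_enorm_Yf_le i.1 i.2
  rw [HasFiniteIntegral, lintegral_polarMeasure]
  refine (ENNReal.tsum_le_tsum hslice).trans_lt ?_
  rw [ENNReal.tsum_mul_left]
  exact ENNReal.mul_lt_top (by finiteness) (hsum.tsum_lintegral_radialMeasure_lt_top hpos N)

theorem integrable_angularDensity : Integrable B.angularDensity (polarMeasure σ) := by
  simpa using integrable_angularDensity_mul_norm_polarPoint_pow hpos hsum 0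

theorem integrable_angularDensity_smul_evalC (P : MvPolynomial (Fin d) ℂ) :
    Integrable (fun ω => B.angularDensity ω • evalC P (B.polarPoint ω)) (polarMeasure σ) := by
  refine (integrable_finsetSum P.support fun m _ =>
    (integrable_angularDensity_mul_norm_polarPoint_pow hpos hsum m.degree).norm.const_mul
      ‖P.coeff m‖).mono' (measurable_angularDensity.smul
        ((continuous_evalC P).measurable.comp measurable_polarPoint)).aestronglyMeasurable
    (.of_forall fun ω => ?_)
  calc ‖B.angularDensity ω • evalC P (B.polarPoint ω)‖
      ≤ ‖B.angularDensity ω‖ * ∑ m ∈ P.support, ‖P.coeff m‖ * ‖B.polarPoint ω‖ ^ m.degree := by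
        rw [norm_smul]
        gcongr
        exact norm_evalC_le P _
    _ = _ := by
        simp only [Finset.mul_sum, norm_mul, norm_pow, norm_norm]
        exact Finset.sum_congr rfl fun m _ => mul_left_comm _ _ _

theorem isMomentMeasure_synthesis : IsMomentMeasure (synthesis σ) := fun P =>
  integrable_totalVariation_map_withDensityᵥ (integrable_angularDensity hpos hsum)
    measurable_polarPoint (continuous_evalC P).stronglyMeasurable
    (integrable_angularDensity_smul_evalC hpos hsum P)

theorem integral_slice_angularDensity_smul (g : ℝ → G) (i j : B.Index) :
    ∫ z, B.angularDensity (i, z) • B.Yf j.1 j.2 (B.polarPoint (i, z)) • g ‖B.polarPoint (i, z)‖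
      ∂(sphMeas d).prod (radialMeasure σ i) =
        if i = j then ∫ r, g r ∂σ j.1 j.2 else 0 := by
  have := hsum.isFiniteMeasure_radialMeasure i
  calc _ = ∫ z : sphere (0 : E d) 1 × ℝ, (B.Yf i.1 i.2 z.1 * B.Yf j.1 j.2 z.1) •
        (z.2 ^ j.1 • g |z.2|) ∂(sphMeas d).prod (radialMeasure σ i) := by
        simp only [norm_polarPoint, angularDensity, Yf_polarPoint, smul_smul, mul_assoc,
          mul_comm (_ ^ j.1)]
    _ = (if i = j then 1 else 0 : ℝ) • ∫ r, r ^ j.1 • g |r| ∂radialMeasure σ i := by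
        rw [← B.integral_Yf_mul_Yf i j]
        exact integral_prod_smul (fun θ : sphere (0 : E d) 1 => B.Yf i.1 i.2 θ * B.Yf j.1 j.2 θ)
          fun r => r ^ j.1 • g |r|
    _ = _ := by
        rcases eq_or_ne i j with rfl | hij
        · simp only [if_true, one_smul, hsum.integral_pow_smul_radialMeasure hpos]
        · simp only [if_neg hij, zero_smul]

theorem sInt_synthesis {g : ℝ → G} (hg : Continuous g) (k : ℕ) (l : Fin (B.a k))
    (hint : Integrable (fun ω =>
      B.angularDensity ω • B.Yf k l (B.polarPoint ω) • g ‖B.polarPoint ω‖) (polarMeasure σ)) :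
    sInt (synthesis σ) (fun x => B.Yf k l x • g ‖x‖) = ∫ r, g r ∂σ k l := by
  have hmeas : StronglyMeasurable fun x : E d => B.Yf k l x • g ‖x‖ :=
    ((B.continuous_Yf k l).smul (hg.comp continuous_norm)).stronglyMeasurable
  rw [synthesis, sInt_map_withDensityᵥ (integrable_angularDensity hpos hsum)
    measurable_polarPoint hmeas hint, integral_polarMeasure hint]
  simp only [integral_slice_angularDensity_smul hpos hsum g _ ⟨k, l⟩]
  exact tsum_ite_eq _ _

theorem sInt_synthesis_evalC (k : ℕ) (l : Fin (B.a k)) (p : Polynomial ℂ) :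
    sInt (synthesis σ) (evalC (Polynomial.aeval (normSqP d) p * B.YC k l)) =
      ∫ r, p.eval ((r : ℂ) ^ 2) ∂σ k l := by
  have hint := integrable_angularDensity_smul_evalC hpos hsum
    (Polynomial.aeval (normSqP d) p * B.YC k l)
  simp only [evalC_aeval_normSqP_mul_YC] at hint
  have hp : Continuous fun r : ℝ => p.eval ((r : ℂ) ^ 2) := p.continuous.comp (by fun_prop)
  rw [funext (B.evalC_aeval_normSqP_mul_YC k l p)]
  exact sInt_synthesis hpos hsum hp k l hint

theorem isComponentFamily_synthesis : B.IsComponentFamily (synthesis σ) σ := by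
  refine fun k l => ⟨hpos k l, fun h hc hcs => ?_⟩
  obtain ⟨C, hC⟩ := hcs.exists_bound_of_continuous hc
  have hY : Integrable (fun ω => B.angularDensity ω * B.Yf k l (B.polarPoint ω))
      (polarMeasure σ) := by
    simpa [evalC_YC] using (integrable_angularDensity_smul_evalC hpos hsum (B.YC k l)).re
  have hint : Integrable (fun ω => B.angularDensity ω • B.Yf k l (B.polarPoint ω) •
      h ‖B.polarPoint ω‖) (polarMeasure σ) := by
    simpa only [smul_eq_mul, mul_assoc, Function.comp_apply] using hY.mul_bdd (c := C)
      (hc.measurable.comp measurable_polarPoint.norm).aestronglyMeasurable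
      (.of_forall fun ω => hC _)
  simpa only [smul_eq_mul, mul_comm] using (sInt_synthesis hpos hsum hc k l hint).symm

end Moments

theorem IsComponentFamily.pseudoPositive {μ : SignedMeasure (E d)}
    (hμ : B.IsComponentFamily μ σ) : B.PseudoPositive μ := fun k l h hc hcs hnn =>
  (hμ k l).2 h hc hcs ▸ integral_nonneg hnn

end Synthesis

end HarmonicBasis

theorem statement10_general {d : ℕ} (B : HarmonicBasis d) (m : ℕ)
    (T : MvPolynomial (Fin d) ℂ →ₗ[ℂ] ℂ) (σ : (k : ℕ) → Fin (B.a k) → Measure ℝ)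
    (hpos : ∀ k l, σ k l (Set.Iio 0) = 0)
    (hrep : ∀ (k : ℕ) (l : Fin (B.a k)) (p : Polynomial ℂ), p.natDegree ≤ m →
      B.component T k l p = ∫ r, p.eval ((r : ℂ) ^ 2) ∂(σ k l))
    (hsum : B.SummCond σ) :
    ∃ μ : SignedMeasure (E d), B.IsComponentFamily μ σ ∧ IsMomentMeasure μ ∧
      ∀ f : MvPolynomial (Fin d) ℂ, B.MemUInf m f → T f = sInt μ (evalC f) := by
  have hmom := HarmonicBasis.isMomentMeasure_synthesis hpos hsum
  refine ⟨_, HarmonicBasis.isComponentFamily_synthesis hpos hsum, hmom, ?_⟩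
  rintro f ⟨K, p, hdeg, -, rfl⟩
  simp only [map_sum, hmom.sInt_evalC_sum, HarmonicBasis.sInt_synthesis_evalC hpos hsum,
    ← hrep _ _ _ (hdeg _ _), HarmonicBasis.component]

theorem statement10 {d : ℕ} (hd : 1 ≤ d) (B : HarmonicBasis d) (n : ℕ) (hn : 1 ≤ n)
    (T : MvPolynomial (Fin d) ℂ →ₗ[ℂ] ℂ)
    (hT1 : ∀ (k : ℕ) (l : Fin (B.a k)) (p : Polynomial ℂ), p.natDegree ≤ n →
      0 ≤ B.component T k l (p.map (starRingEnd ℂ) * p))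
    (hT2 : ∀ (k : ℕ) (l : Fin (B.a k)) (p : Polynomial ℂ), p.degree < (n : WithBot ℕ) →
      0 ≤ B.component T k l (Polynomial.X * (p.map (starRingEnd ℂ) * p)))
    (σ : (k : ℕ) → Fin (B.a k) → Measure ℝ)
    (hpos : ∀ k l, (σ k l) (Set.Iio 0) = 0)
    (hrep : ∀ (k : ℕ) (l : Fin (B.a k)) (p : Polynomial ℂ), p.natDegree ≤ 2 * n - 1 →
      B.component T k l p = ∫ r, p.eval ((r : ℂ) ^ 2) ∂(σ k l))
    (hsum : B.SummCond σ) :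
    ∃ μ : SignedMeasure (E d), B.PseudoPositive μ ∧ IsMomentMeasure μ ∧
      ∀ f : MvPolynomial (Fin d) ℂ, B.MemUInf (2 * n - 1) f → T f = sInt μ (evalC f) := by
  obtain ⟨μ, hμσ, hmom, hT⟩ := statement10_general B (2 * n - 1) T σ hpos hrep hsum
  exact ⟨μ, hμσ.pseudoPositive, hmom, hT⟩
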